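/- Let ‖·‖ be an arbitrary norm on ℝ^d, let τ > 0, and let x : [0, τ] → ℝ^d be a twice continuously differentiable curve. Then for every t ∈ [0, τ], the distance (measured in ‖·‖) from the point x(t) to the line segment joining x(0) and x(τ) is at most (τ²/8) · sup_{s ∈ [0, τ]} ‖x''(s)‖. -/

import Mathlib

open Set

/-- `f : ℝ^d → ℝ` is a norm. -/
def IsNorm {d : ℕ} (f : (Fin d → ℝ) → ℝ) : Prop :=
  (∀ x, 0 ≤ f x) ∧ (∀ x, f x = 0 ↔ x = 0) ∧
  (∀ (c : ℝ) (x), f (c • x) = |c| * f x) ∧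
  (∀ x y, f (x + y) ≤ f x + f y)

/-!
Let `M` bound the norm of the second derivative of a curve `x`. By Hahn–Banach, the norm of the
deviation of `x` from its chord at a point is the value on that deviation of some linear functional
`φ` dominated by the norm, that is, the deviation of the real function `φ ∘ x` from its own chord.
As `(φ ∘ x)'' ≥ -M`, the function `φ ∘ x` is strongly convex with the negative modulus `-M`, so at a
convex combination `α u + β v` it exceeds its chord over `[u, v]` by at most
`α β M (u - v)² / 2 ≤ M (u - v)² / 8`.
-/

theorem strongConvexOn_of_hasDerivWithinAt2_ge {D : Set ℝ} (hD : Convex ℝ D) {g g' g'' : ℝ → ℝ}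
    {m : ℝ} (hg : ContinuousOn g D)
    (hg' : ∀ s ∈ interior D, HasDerivWithinAt g (g' s) (interior D) s)
    (hg'' : ∀ s ∈ interior D, HasDerivWithinAt g' (g'' s) (interior D) s)
    (hm : ∀ s ∈ interior D, m ≤ g'' s) : StrongConvexOn D m g := by
  simp only [strongConvexOn_iff_convex, Real.norm_eq_abs, sq_abs]
  refine convexOn_of_hasDerivWithinAt2_nonneg hD (f' := fun s ↦ g' s - m * s)
    (f'' := fun s ↦ g'' s - m) (by fun_prop) (fun s hs ↦ ?_) (fun s hs ↦ ?_)
    fun s hs ↦ sub_nonneg.2 (hm s hs)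
  · refine ((hg' s hs).sub ((hasDerivWithinAt_id s _).pow 2 |>.const_mul (m / 2))).congr_deriv ?_
    simp only [id]
    ring
  · exact ((hg'' s hs).sub ((hasDerivWithinAt_id s _).const_mul m)).congr_deriv (by rw [mul_one])

theorem exists_strongDual_apply_eq_and_abs_le {E : Type*} [AddCommGroup E] [Module ℝ E]
    [TopologicalSpace E] [PolynormableSpace ℝ E] {p : Seminorm ℝ E} (hp : Continuous p) (v : E) :
    ∃ φ : StrongDual ℝ E, φ v = p v ∧ ∀ y, |φ y| ≤ p y := by
  rcases eq_or_ne v 0 with rfl | hv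
  · exact ⟨0, by simp, fun y ↦ by simp⟩
  let φ₀ : E →ₗ.[ℝ] ℝ := LinearPMap.mkSpanSingleton v (p v) hv
  have φ₀_le (y : φ₀.domain) : φ₀ y ≤ p y := by
    obtain ⟨y, hy⟩ := y
    obtain ⟨c, rfl⟩ := Submodule.mem_span_singleton.1 hy
    rw [LinearPMap.mkSpanSingleton'_apply, map_smul_eq_mul, smul_eq_mul]
    gcongr
    exact Real.le_norm_self c
  obtain ⟨φ, φ_eq, φ_le⟩ :=
    Module.Dual.exists_continuous_extension_of_le_seminorm_real φ₀.domain φ₀.toFun hp φ₀_le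
  exact ⟨φ, (φ_eq ⟨v, Submodule.mem_span_singleton_self v⟩).trans
    (LinearPMap.mkSpanSingleton_apply ℝ ℝ hv (p v)), φ_le⟩

section NormedSpace

variable {E : Type*} [NormedAddCommGroup E] [NormedSpace ℝ E] {p : Seminorm ℝ E}

theorem seminorm_sub_convexCombination_le (hp : Continuous p) {D : Set ℝ} (hD : Convex ℝ D)
    {x x' x'' : ℝ → E} {M : ℝ} (hx : ContinuousOn x D)
    (hx' : ∀ s ∈ interior D, HasDerivWithinAt x (x' s) (interior D) s)
    (hx'' : ∀ s ∈ interior D, HasDerivWithinAt x' (x'' s) (interior D) s)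
    (hM : ∀ s ∈ interior D, p (x'' s) ≤ M) {u v α β : ℝ} (hu : u ∈ D) (hv : v ∈ D)
    (hα : 0 ≤ α) (hβ : 0 ≤ β) (hαβ : α + β = 1) :
    p (x (α • u + β • v) - (α • x u + β • x v)) ≤ α * β * (M / 2 * (u - v) ^ 2) := by
  obtain ⟨φ, φ_eq, φ_le⟩ :=
    exists_strongDual_apply_eq_and_abs_le hp (x (α • u + β • v) - (α • x u + β • x v))
  have neg_le_φ (s : ℝ) (hs : s ∈ interior D) : -M ≤ φ (x'' s) :=
    neg_le_of_abs_le ((φ_le _).trans (hM s hs))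
  have convex_φ : StrongConvexOn D (-M) (φ ∘ x) :=
    strongConvexOn_of_hasDerivWithinAt2_ge hD (φ.continuous.comp_continuousOn hx)
      (fun s hs ↦ φ.hasFDerivAt.comp_hasDerivWithinAt s (hx' s hs))
      (fun s hs ↦ φ.hasFDerivAt.comp_hasDerivWithinAt s (hx'' s hs)) neg_le_φ
  have φ_le_chord := convex_φ.2 hu hv hα hβ hαβ
  simp only [Function.comp_apply, Real.norm_eq_abs, sq_abs] at φ_le_chord
  rw [← φ_eq, map_sub, map_add, map_smul, map_smul]
  linarith

theorem exists_mem_segment_seminorm_sub_le (hp : Continuous p) {x x' x'' : ℝ → E} {a b t M : ℝ}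
    (hx' : ∀ s ∈ Icc a b, HasDerivWithinAt x (x' s) (Icc a b) s)
    (hx'' : ∀ s ∈ Icc a b, HasDerivWithinAt x' (x'' s) (Icc a b) s)
    (hM : ∀ s ∈ Icc a b, p (x'' s) ≤ M) (ht : t ∈ Icc a b) :
    ∃ z ∈ segment ℝ (x a) (x b), p (x t - z) ≤ (b - a) ^ 2 / 8 * M := by
  have hab : a ≤ b := ht.1.trans ht.2
  have hM₀ : 0 ≤ M := (apply_nonneg p _).trans (hM t ht)
  obtain ⟨α, β, hα, hβ, hαβ, rfl⟩ := (segment_eq_Icc hab).symm ▸ ht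
  refine ⟨α • x a + β • x b, ⟨α, β, hα, hβ, hαβ, rfl⟩, ?_⟩
  have mul_le : α * β ≤ 1 / 4 := by nlinarith [sq_nonneg (α - β)]
  calc p (x (α • a + β • b) - (α • x a + β • x b))
      ≤ α * β * (M / 2 * (a - b) ^ 2) :=
        seminorm_sub_convexCombination_le hp (convex_Icc a b)
          (fun s hs ↦ (hx' s hs).continuousWithinAt)
          (fun s hs ↦ (hx' s (interior_subset hs)).mono interior_subset)
          (fun s hs ↦ (hx'' s (interior_subset hs)).mono interior_subset)
          (fun s hs ↦ hM s (interior_subset hs))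
          (left_mem_Icc.2 hab) (right_mem_Icc.2 hab) hα hβ hαβ
    _ ≤ 1 / 4 * (M / 2 * (a - b) ^ 2) := by gcongr
    _ = (b - a) ^ 2 / 8 * M := by ring

theorem dist_to_chord_le_general (hp : Continuous p) {x x' x'' : ℝ → E} {a b t : ℝ}
    (hx' : ∀ s ∈ Icc a b, HasDerivWithinAt x (x' s) (Icc a b) s)
    (hx'' : ∀ s ∈ Icc a b, HasDerivWithinAt x' (x'' s) (Icc a b) s)
    (hbdd : BddAbove ((fun s ↦ p (x'' s)) '' Icc a b)) (ht : t ∈ Icc a b) :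
    sInf ((fun z ↦ p (x t - z)) '' segment ℝ (x a) (x b)) ≤
      (b - a) ^ 2 / 8 * sSup ((fun s ↦ p (x'' s)) '' Icc a b) := by
  obtain ⟨z, hz, z_le⟩ := exists_mem_segment_seminorm_sub_le hp hx' hx''
    (fun s hs ↦ le_csSup hbdd (mem_image_of_mem _ hs)) ht
  have bddBelow : BddBelow ((fun z ↦ p (x t - z)) '' segment ℝ (x a) (x b)) :=
    ⟨0, forall_mem_image.2 fun _ _ ↦ apply_nonneg p _⟩
  exact (csInf_le bddBelow (mem_image_of_mem _ hz)).trans z_le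

theorem continuous_seminorm_of_finiteDimensional [FiniteDimensional ℝ E] (p : Seminorm ℝ E) :
    Continuous p :=
  continuousOn_univ.1 (p.convexOn.continuousOn isOpen_univ)

end NormedSpace

/-- A norm in the sense of `IsNorm` as a bundled seminorm, whose coercion to a function unfolds
to `f`. -/
def IsNorm.toSeminorm {d : ℕ} {f : (Fin d → ℝ) → ℝ} (hf : IsNorm f) : Seminorm ℝ (Fin d → ℝ) :=
  Seminorm.of f hf.2.2.2 hf.2.2.1

/-- For a `C²` curve `x : [0, τ] → ℝ^d` and an arbitrary norm `f`, the `f`-distance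
from `x(t)` to the segment `[x(0), x(τ)]` is at most `(τ²/8) · sup_{[0,τ]} f(x'')`. -/
theorem dist_to_chord_le (d : ℕ) (f : (Fin d → ℝ) → ℝ) (hf : IsNorm f)
    (τ : ℝ) (hτ : 0 < τ) (x x' x'' : ℝ → Fin d → ℝ)
    (hx' : ∀ t ∈ Set.Icc (0 : ℝ) τ, HasDerivWithinAt x (x' t) (Set.Icc 0 τ) t)
    (hx'' : ∀ t ∈ Set.Icc (0 : ℝ) τ, HasDerivWithinAt x' (x'' t) (Set.Icc 0 τ) t)
    (hcont : ContinuousOn x'' (Set.Icc 0 τ)) :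
    ∀ t ∈ Set.Icc (0 : ℝ) τ,
      sInf {r : ℝ | ∃ z ∈ segment ℝ (x 0) (x τ), r = f (x t - z)} ≤
        τ ^ 2 / 8 * sSup {r : ℝ | ∃ s ∈ Set.Icc (0 : ℝ) τ, r = f (x'' s)} := by
  intro t ht
  have f_continuous : Continuous hf.toSeminorm := continuous_seminorm_of_finiteDimensional _
  simpa only [image, eq_comm, sub_zero] using! dist_to_chord_le_general f_continuous hx' hx''
    (isCompact_Icc.bddAbove_image (f_continuous.comp_continuousOn hcont)) ht
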